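/- (Proof step of Theorem 1: CCC-sum evaluation.) Under the construction setup, for every fixed 0 ≤ t_1 ≤ 2^s−1, all 0 ≤ i, j ≤ 2^{k+1}−1 and all shifts 0 ≤ τ ≤ 2^m, one has 2·Σ_{ν=0}^{2^{k+1}−1} γ(s^{(t_1,i)}_ν, s^{(t_1,j)}_ν)(τ) = 2^{m+k+2} if τ = 0 and i = j, and = 0 otherwise, where s^{(t_1,t_2)}_ν (0 ≤ ν ≤ 2^{k+1}−1) denote the sequences of S^{(t_1,t_2)} (indexed by (d,d_0,…,d_{k−1})). -/

import Mathlib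

/-- Aperiodic cross-correlation function (ACCF) of two complex sequences of length `L`,
for an integer shift `u` with `−L < u ≤ L`:
`γ(a,b)(u) = Σ_{i=0}^{L−1−u} a_i · conj(b_{i+u})` for `0 ≤ u`, and
`γ(a,b)(u) = Σ_{i=0}^{L+u−1} a_{i−u} · conj(b_i)` for `u < 0`. -/
noncomputable def accf (L : ℕ) (a b : ℕ → ℂ) (u : ℤ) : ℂ :=
  if 0 ≤ u then ∑ i ∈ Finset.range (L - u.toNat), a i * (starRingEnd ℂ) (b (i + u.toNat))
  else ∑ i ∈ Finset.range (L - (-u).toNat), a (i + (-u).toNat) * (starRingEnd ℂ) (b i)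

/-- ACCF for a nonnegative shift `u : ℕ`. -/
noncomputable def accfN (L : ℕ) (a b : ℕ → ℂ) (u : ℕ) : ℂ :=
  ∑ i ∈ Finset.range (L - u), a i * (starRingEnd ℂ) (b (i + u))

/-- Periodic cross-correlation function of two sequences of length `N`. -/
noncomputable def pccf (N : ℕ) (x y : ℕ → ℂ) (u : ℕ) : ℂ :=
  ∑ n ∈ Finset.range N, x n * (starRingEnd ℂ) (y ((n + u) % N))

/-- The `t`-th bit of `x`, as an element of `ZMod q`. -/
def bitc (q : ℕ) (x t : ℕ) : ZMod q := if x.testBit t then 1 else 0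

/-- The `t`-th bit of `x`, as a natural number. -/
def bitn (x t : ℕ) : ℕ := if x.testBit t then 1 else 0

/-- `ω = exp(2π√−1/q)`. -/
noncomputable def omegaQ (q : ℕ) : ℂ := Complex.exp (2 * Real.pi * Complex.I / (q : ℂ))

/-- The construction setup of Lemma 2/Theorem 1: integers `0 ≤ s ≤ k ≤ m−2`, an even
integer `q ≥ 2`, index sets `J = {j_0,…,j_{k−1−s}} ⊆ {0,…,m−s−1}` and
`I = {i_0,…,i_{m−k−1}} = {0,…,m−s−1} \ J`, a permutation `π` of `{0,…,m−k−1}`,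
and a GBF `f : {0,1}^m → ℤ_q` (written as a function of the index `x < 2^m`) all of whose
restrictions over the variables `x_{j_0},…,x_{j_{k−s−1}}` are of the prescribed
path-plus-isolated-vertices quadratic form. -/
structure ZCZSetup where
  /-- the (even) alphabet size -/
  q : ℕ
  hq : 2 ≤ q
  hqeven : Even q
  m : ℕ
  k : ℕ
  s : ℕ
  hsk : s ≤ k
  hkm : k + 2 ≤ m
  /-- `jv β = j_β` for `β < k − s` (the non-forced part of `J`) -/
  jv : ℕ → ℕ
  /-- `iv β = i_β` for `β < m − k` (an enumeration of `I`) -/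
  iv : ℕ → ℕ
  /-- the permutation `π` of `{0,…,m−k−1}` -/
  perm : ℕ → ℕ
  hperm : Set.BijOn perm (Set.Iio (m - k)) (Set.Iio (m - k))
  hjv_lt : ∀ β < k - s, jv β < m - s
  hjv_inj : ∀ β₁ < k - s, ∀ β₂ < k - s, jv β₁ = jv β₂ → β₁ = β₂
  hiv_lt : ∀ β < m - k, iv β < m - s
  hiv_inj : ∀ β₁ < m - k, ∀ β₂ < m - k, iv β₁ = iv β₂ → β₁ = β₂
  hdisj : ∀ β₁ < k - s, ∀ β₂ < m - k, jv β₁ ≠ iv β₂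
  /-- the GBF `f`, as a function of the index `x` (with `j`-th bit `x_j`) -/
  f : ℕ → ZMod q
  hf : ∀ e : ℕ → Bool, ∃ u : ℕ → ZMod q, ∃ v' : ℕ → ZMod q, ∃ v : ZMod q,
    ∀ x < 2 ^ m, (∀ β < k - s, x.testBit (jv β) = e β) →
      f x = ((q / 2 : ℕ) : ZMod q) * (∑ β ∈ Finset.range (m - k - 1),
              bitc q x (iv (perm β)) * bitc q x (iv (perm (β + 1))))
          + (∑ β ∈ Finset.range (m - k), u β * bitc q x (iv β))
          + (∑ β ∈ Finset.range s, v' β * bitc q x (m - s + β)) + v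

namespace ZCZSetup

variable (C : ZCZSetup)

/-- The full tuple `(j_0,…,j_{k−1})`: `j_β = jv β` for `β < k − s` and
`j_{k−s+β} = m − s + β` for `0 ≤ β < s`. -/
def jfull (β : ℕ) : ℕ :=
  if β < C.k - C.s then C.jv β else C.m - C.s + (β - (C.k - C.s))

/-- The bits `b_0,…,b_{k+s+1}`: `t_2 = Σ_{β=0}^{k} b_β 2^β` and
`t_1 = Σ_{β=0}^{s−1} b_{k+1+β} 2^β`. -/
def bbit (t1 t2 β : ℕ) : ℕ :=
  if β < C.k + 1 then bitn t2 β else bitn t1 (β - (C.k + 1))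

/-- `γ_1 = i_{π(0)}`, an end vertex of the path. -/
def gamma1 : ℕ := C.iv (C.perm 0)

/-- `γ_2 = i_{π(m−k−1)}`, the other end vertex of the path. -/
def gamma2 : ℕ := C.iv (C.perm (C.m - C.k - 1))

/-- The GBF (as a function of the index `x`) of the `ν`-th sequence of `S^{(t_1,t_2)}`,
where `ν = d·2^k + Σ_{β=0}^{k−1} d_β 2^β` encodes `(d, d_0,…,d_{k−1})`. -/
def gExp (t1 t2 ν x : ℕ) : ZMod C.q :=
  C.f x + ((C.q / 2 : ℕ) : ZMod C.q) *
    ((∑ β ∈ Finset.range C.k, bitc C.q ν β * bitc C.q x (C.jfull β))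
     + bitc C.q ν C.k * bitc C.q x C.gamma1
     + (∑ β ∈ Finset.range C.k, ((C.bbit t1 t2 β : ℕ) : ZMod C.q) * bitc C.q x (C.jfull β))
     + (∑ β ∈ Finset.Ico (C.k - C.s) C.k,
          bitc C.q ν β * ((C.bbit t1 t2 (C.s + 1 + β) : ℕ) : ZMod C.q))
     + ((C.bbit t1 t2 C.k : ℕ) : ZMod C.q) * bitc C.q x C.gamma2)

/-- The `ν`-th sequence `s^{(t_1,t_2)}_ν` of `S^{(t_1,t_2)}` (a complex sequence of
length `2^m`). -/
noncomputable def Sseq (t1 t2 ν : ℕ) : ℕ → ℂ :=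
  fun x => omegaQ C.q ^ (C.gExp t1 t2 ν x).val

end ZCZSetup

/-- If flipping a bit `p` negates a function, its sum over all `n`-bit numbers vanishes. -/
theorem sum_eq_zero_of_flip_eq_neg {n p : ℕ} (hp : p < n) (F : ℕ → ℂ)
    (hF : ∀ x < 2 ^ n, F (x ^^^ 2 ^ p) = -F x) : ∑ x ∈ Finset.range (2 ^ n), F x = 0 := by
  have hpn : 2 ^ p < 2 ^ n := Nat.pow_lt_pow_right (by norm_num) hp
  refine Finset.sum_involution (fun x _ => x ^^^ 2 ^ p) ?_ ?_ ?_ ?_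
  · intro x hx
    rw [hF x (Finset.mem_range.1 hx), add_neg_cancel]
  · intro x _ _ h
    have := congrArg (fun z => Nat.testBit z p) h
    simp [Nat.testBit_xor] at this
  · intro x hx
    exact Finset.mem_range.2 (Nat.xor_lt_two_pow (Finset.mem_range.1 hx) hpn)
  · intro x _
    simp

theorem testBit_flip (x p t : ℕ) :
    (x ^^^ 2 ^ p).testBit t = if t = p then !x.testBit t else x.testBit t := by
  rw [Nat.testBit_xor, Nat.testBit_two_pow]
  by_cases h : t = p
  · simp [h]
  · simp [h, Ne.symm h]

theorem bitc_flip (q x p t : ℕ) :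
    bitc q (x ^^^ 2 ^ p) t = bitc q x t + if t = p then 1 - 2 * bitc q x p else 0 := by
  unfold bitc
  rw [testBit_flip]
  by_cases h : t = p
  · subst h
    cases x.testBit t <;> simp; norm_num
  · simp [h]

theorem bitc_flip_of_ne {q x p t : ℕ} (h : t ≠ p) : bitc q (x ^^^ 2 ^ p) t = bitc q x t := by
  simp [bitc_flip, h]

/-- Flipping bit `p` adds `± 2 ^ p`. -/
theorem flip_eq_add (x p : ℕ) :
    ((x ^^^ 2 ^ p : ℕ) : ℤ) = x + 2 ^ p * (if x.testBit p then -1 else 1) := by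
  induction p generalizing x with
  | zero =>
    have h1 : (x ^^^ 1) / 2 = x / 2 := by rw [Nat.xor_div_two]; simp
    have h2 : (x ^^^ 1) % 2 = (x + 1) % 2 := by rw [Nat.xor_mod_two_eq]
    simp only [pow_zero, Nat.testBit_zero]
    split_ifs with h <;> simp at h <;> omega
  | succ p ih =>
    have h1 : (x ^^^ 2 ^ (p + 1)) / 2 = x / 2 ^^^ 2 ^ p := by
      rw [Nat.xor_div_two, pow_succ, Nat.mul_div_cancel _ (by norm_num)]
    have h2 : (x ^^^ 2 ^ (p + 1)) % 2 = x % 2 := by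
      rw [Nat.xor_mod_two_eq, pow_succ]; omega
    have h3 := ih (x / 2)
    rw [← h1, ← Nat.testBit_succ] at h3
    rw [show (2 : ℤ) ^ (p + 1) = 2 * 2 ^ p from pow_succ' 2 p]
    split_ifs at h3 ⊢ <;> push_cast at h3 <;> omega

theorem flip_add {x p τ : ℕ} (h : x.testBit p = (x + τ).testBit p) :
    (x ^^^ 2 ^ p) + τ = (x + τ) ^^^ 2 ^ p := by
  have h1 := flip_eq_add x p
  have h2 := flip_eq_add (x + τ) p
  rw [← h] at h2
  push_cast at h2
  omega

namespace ZCZSetup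

variable (C : ZCZSetup)

instance : NeZero C.q := ⟨by have := C.hq; omega⟩

/-- The element `q / 2` of `ZMod q`. -/
def half : ZMod C.q := ((C.q / 2 : ℕ) : ZMod C.q)

theorem two_mul_half : 2 * C.half = 0 := by
  have h : 2 * (C.q / 2) = C.q := Nat.two_mul_div_two_of_even C.hqeven
  have h' := congrArg (Nat.cast : ℕ → ZMod C.q) h
  rw [ZMod.natCast_self] at h'
  rwa [Nat.cast_mul, Nat.cast_two] at h'

theorem stdAddChar_half : ZMod.stdAddChar C.half = -1 := by
  have h : 2 * (C.q / 2) = C.q := Nat.two_mul_div_two_of_even C.hqeven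
  have hq : (C.q : ℂ) ≠ 0 := Nat.cast_ne_zero.2 (NeZero.ne C.q)
  have h' : (2 : ℂ) * ((C.q / 2 : ℕ) : ℂ) = C.q := by exact_mod_cast h
  have h2 := ZMod.stdAddChar_coe (N := C.q) ((C.q / 2 : ℕ) : ℤ)
  rw [half, ← Int.cast_natCast, h2, ← Complex.exp_pi_mul_I]
  congr 1
  rw [div_eq_iff hq, ← h', Int.cast_natCast]
  ring

theorem stdAddChar_eq_neg {a b : ZMod C.q} (h : a = b + C.half) :
    ZMod.stdAddChar a = -ZMod.stdAddChar b := by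
  rw [h, AddChar.map_add_eq_mul, C.stdAddChar_half, mul_neg_one]

theorem half_mul_bitc_sub {x y t t' : ℕ} (h : x.testBit t ≠ y.testBit t') :
    C.half * (bitc C.q x t - bitc C.q y t') = C.half := by
  unfold bitc
  cases hx : x.testBit t <;> cases hy : y.testBit t' <;> simp_all
  linear_combination -C.two_mul_half

theorem Sseq_eq_stdAddChar (t1 t2 ν x : ℕ) :
    C.Sseq t1 t2 ν x = ZMod.stdAddChar (C.gExp t1 t2 ν x) := by
  have h := ZMod.stdAddChar_coe (N := C.q) ((C.gExp t1 t2 ν x).val : ℤ)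
  rw [Int.cast_natCast, ZMod.natCast_zmod_val] at h
  rw [Sseq, omegaQ, h, ← Complex.exp_nat_mul]
  congr 1
  push_cast
  ring

theorem Sseq_mul_conj (t1 i j ν x y : ℕ) :
    C.Sseq t1 i ν x * (starRingEnd ℂ) (C.Sseq t1 j ν y) =
      ZMod.stdAddChar (C.gExp t1 i ν x - C.gExp t1 j ν y) := by
  rw [Sseq_eq_stdAddChar, Sseq_eq_stdAddChar, ← AddChar.map_neg_eq_conj,
    ← AddChar.map_add_eq_mul, sub_eq_add_neg]

theorem jfull_lt {β : ℕ} (hβ : β < C.k) : C.jfull β < C.m := by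
  have := C.hsk
  have := C.hkm
  unfold jfull
  split_ifs with h
  · have := C.hjv_lt β h
    omega
  · omega

theorem jfull_inj {β β' : ℕ} (h : C.jfull β = C.jfull β') : β = β' := by
  have := C.hsk
  have := C.hkm
  unfold jfull at h
  split_ifs at h with h1 h2 h2
  · exact C.hjv_inj _ h1 _ h2 h
  · have := C.hjv_lt β h1
    omega
  · have := C.hjv_lt β' h2
    omega
  · omega

/-- `pathv β` is the `β`-th vertex of the path. -/
def pathv (β : ℕ) : ℕ := C.iv (C.perm β)

theorem pathv_lt {β : ℕ} (hβ : β < C.m - C.k) : C.pathv β < C.m - C.s :=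
  C.hiv_lt _ (C.hperm.mapsTo hβ)

theorem pathv_inj {β β' : ℕ} (hβ : β < C.m - C.k) (hβ' : β' < C.m - C.k)
    (h : C.pathv β = C.pathv β') : β = β' :=
  C.hperm.injOn hβ hβ' (C.hiv_inj _ (C.hperm.mapsTo hβ) _ (C.hperm.mapsTo hβ') h)

theorem jfull_ne_pathv {β β' : ℕ} (hβ' : β' < C.m - C.k) :
    C.jfull β ≠ C.pathv β' := by
  have := C.pathv_lt hβ'
  unfold jfull
  split_ifs with h
  · exact C.hdisj _ h _ (C.hperm.mapsTo hβ')
  · omega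

theorem exists_eq_jfull_or_pathv {t : ℕ} (ht : t < C.m) :
    (∃ β < C.k, C.jfull β = t) ∨ ∃ β < C.m - C.k, C.pathv β = t := by
  have := C.hkm
  let c : ℕ → ℕ := fun β => if β < C.k then C.jfull β else C.pathv (β - C.k)
  have hmaps : Set.MapsTo c (Finset.range C.m) (Finset.range C.m) := by
    intro β hβ
    simp only [Finset.coe_range, Set.mem_Iio, c] at hβ ⊢
    split_ifs with h
    · exact C.jfull_lt h
    · have := C.pathv_lt (β := β - C.k) (by omega)
      omega
  have hinj : Set.InjOn c (Finset.range C.m) := by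
    intro β hβ β' hβ' h
    simp only [Finset.coe_range, Set.mem_Iio, c] at hβ hβ' h
    split_ifs at h with h1 h2 h2
    · exact C.jfull_inj h
    · exact absurd h (C.jfull_ne_pathv (by omega))
    · exact absurd h.symm (C.jfull_ne_pathv (by omega))
    · have := C.pathv_inj (by omega) (by omega) h
      omega
  obtain ⟨β, hβ, h⟩ := Finset.surjOn_of_injOn_of_card_le c hmaps hinj le_rfl
    (Finset.mem_coe.2 (Finset.mem_range.2 ht))
  simp only [Finset.coe_range, Set.mem_Iio, c] at hβ h
  split_ifs at h with h1
  · exact Or.inl ⟨β, h1, h⟩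
  · exact Or.inr ⟨β - C.k, by omega, h⟩

theorem gExp_flip_index {p : ℕ} (hp : p < C.k) (t1 t2 ν x : ℕ) :
    C.gExp t1 t2 (ν ^^^ 2 ^ p) x = C.gExp t1 t2 ν x + C.half * (bitc C.q x (C.jfull p) +
      if C.k - C.s ≤ p then ((C.bbit t1 t2 (C.s + 1 + p) : ℕ) : ZMod C.q) else 0) := by
  have hk : C.k ≠ p := by omega
  have h2 := C.two_mul_half
  simp only [gExp, bitc_flip, add_mul, Finset.sum_add_distrib, ite_mul, zero_mul,
    Finset.sum_ite_eq', Finset.mem_range, Finset.mem_Ico, hp, hk, if_true, if_false, and_true]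
  change _ + C.half * _ = _ + C.half * _ + _
  split_ifs
  · linear_combination (-bitc C.q ν p * bitc C.q x (C.jfull p) -
      bitc C.q ν p * ((C.bbit t1 t2 (C.s + 1 + p) : ℕ) : ZMod C.q)) * h2
  · linear_combination (-bitc C.q ν p * bitc C.q x (C.jfull p)) * h2

theorem gExp_flip_index_last (t1 t2 ν x : ℕ) :
    C.gExp t1 t2 (ν ^^^ 2 ^ C.k) x = C.gExp t1 t2 ν x + C.half * bitc C.q x C.gamma1 := by
  have h2 := C.two_mul_half
  have e1 : ∑ β ∈ Finset.range C.k, bitc C.q (ν ^^^ 2 ^ C.k) β * bitc C.q x (C.jfull β) =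
      ∑ β ∈ Finset.range C.k, bitc C.q ν β * bitc C.q x (C.jfull β) :=
    Finset.sum_congr rfl fun β hβ => by
      rw [bitc_flip_of_ne (Finset.mem_range.1 hβ).ne]
  have e2 : ∑ β ∈ Finset.Ico (C.k - C.s) C.k,
        bitc C.q (ν ^^^ 2 ^ C.k) β * ((C.bbit t1 t2 (C.s + 1 + β) : ℕ) : ZMod C.q) =
      ∑ β ∈ Finset.Ico (C.k - C.s) C.k,
        bitc C.q ν β * ((C.bbit t1 t2 (C.s + 1 + β) : ℕ) : ZMod C.q) :=
    Finset.sum_congr rfl fun β hβ => by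
      rw [bitc_flip_of_ne (Finset.mem_Ico.1 hβ).2.ne]
  rw [gExp, gExp, e1, e2, bitc_flip, if_pos rfl]
  change _ + C.half * _ = _ + C.half * _ + _
  linear_combination (-bitc C.q ν C.k * bitc C.q x C.gamma1) * h2

theorem bbit_eq_of_le {β : ℕ} (hβ : C.k - C.s ≤ β) (t1 i j : ℕ) :
    C.bbit t1 i (C.s + 1 + β) = C.bbit t1 j (C.s + 1 + β) := by
  have h : ¬ C.s + 1 + β < C.k + 1 := by omega
  simp [bbit, h]

/-- The bits of `x` and `y` agree at `γ₁` and at every `j_β`. -/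
def Agree (x y : ℕ) : Prop :=
  (∀ β < C.k, x.testBit (C.jfull β) = y.testBit (C.jfull β)) ∧
    x.testBit C.gamma1 = y.testBit C.gamma1

/-- Summing over the index `ν` kills the pairs of positions that do not agree. -/
theorem sum_index_eq_zero {x y : ℕ} (h : ¬ C.Agree x y) (t1 i j : ℕ) :
    ∑ ν ∈ Finset.range (2 ^ (C.k + 1)),
      ZMod.stdAddChar (C.gExp t1 i ν x - C.gExp t1 j ν y) = 0 := by
  by_cases h1 : x.testBit C.gamma1 = y.testBit C.gamma1
  · have h2 : ∃ β < C.k, x.testBit (C.jfull β) ≠ y.testBit (C.jfull β) := by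
      by_contra! h2
      exact h ⟨h2, h1⟩
    obtain ⟨β, hβ, hne⟩ := h2
    refine sum_eq_zero_of_flip_eq_neg (p := β) (by omega) _ fun ν _ => C.stdAddChar_eq_neg ?_
    rw [gExp_flip_index _ hβ, gExp_flip_index _ hβ]
    have e := C.half_mul_bitc_sub hne
    split_ifs with hs
    · rw [C.bbit_eq_of_le hs t1 i j]
      linear_combination e
    · linear_combination e
  · refine sum_eq_zero_of_flip_eq_neg (p := C.k) (by omega) _ fun ν _ => C.stdAddChar_eq_neg ?_
    rw [gExp_flip_index_last, gExp_flip_index_last]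
    linear_combination C.half_mul_bitc_sub h1

theorem bbit_of_le {β : ℕ} (hβ : β ≤ C.k) (t1 t2 : ℕ) :
    ((C.bbit t1 t2 β : ℕ) : ZMod C.q) = bitc C.q t2 β := by
  simp [bbit, bitn, bitc, Nat.lt_succ_of_le hβ]

theorem gExp_sub_gExp (t1 i j ν x : ℕ) :
    C.gExp t1 i ν x - C.gExp t1 j ν x = C.half *
      ((∑ β ∈ Finset.range C.k, (bitc C.q i β - bitc C.q j β) * bitc C.q x (C.jfull β)) +
        (bitc C.q i C.k - bitc C.q j C.k) * bitc C.q x C.gamma2) := by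
  have e (t2 : ℕ) : ∑ β ∈ Finset.range C.k,
      ((C.bbit t1 t2 β : ℕ) : ZMod C.q) * bitc C.q x (C.jfull β) =
      ∑ β ∈ Finset.range C.k, bitc C.q t2 β * bitc C.q x (C.jfull β) :=
    Finset.sum_congr rfl fun β hβ => by rw [C.bbit_of_le (Finset.mem_range.1 hβ).le]
  have e' : ∑ β ∈ Finset.Ico (C.k - C.s) C.k,
        bitc C.q ν β * ((C.bbit t1 i (C.s + 1 + β) : ℕ) : ZMod C.q) =
      ∑ β ∈ Finset.Ico (C.k - C.s) C.k,
        bitc C.q ν β * ((C.bbit t1 j (C.s + 1 + β) : ℕ) : ZMod C.q) :=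
    Finset.sum_congr rfl fun β hβ => by rw [C.bbit_eq_of_le (Finset.mem_Ico.1 hβ).1 t1 i j]
  simp only [gExp, e, e', C.bbit_of_le le_rfl, sub_mul, Finset.sum_sub_distrib]
  change _ + C.half * _ - (_ + C.half * _) = _
  ring

theorem gamma2_eq : C.gamma2 = C.pathv (C.m - C.k - 1) := rfl

/-- Distinct members of the code are orthogonal at shift zero. -/
theorem sum_position_eq_zero {i j : ℕ} (hi : i < 2 ^ (C.k + 1)) (hj : j < 2 ^ (C.k + 1))
    (hij : i ≠ j) (t1 ν : ℕ) :
    ∑ x ∈ Finset.range (2 ^ C.m),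
      ZMod.stdAddChar (C.gExp t1 i ν x - C.gExp t1 j ν x) = 0 := by
  have hkm := C.hkm
  have h2 := C.two_mul_half
  have hlast : C.m - C.k - 1 < C.m - C.k := by omega
  obtain ⟨p, hp⟩ := Nat.exists_testBit_ne_of_ne hij
  have hpk : p ≤ C.k := by
    by_contra! h
    have hle : 2 ^ (C.k + 1) ≤ 2 ^ p := Nat.pow_le_pow_right (by norm_num) h
    rw [Nat.testBit_eq_false_of_lt (hi.trans_le hle),
      Nat.testBit_eq_false_of_lt (hj.trans_le hle)] at hp
    exact hp rfl
  have e := C.half_mul_bitc_sub hp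
  rcases hpk.lt_or_eq with hpk | rfl
  · refine sum_eq_zero_of_flip_eq_neg (C.jfull_lt hpk) _ fun x _ => C.stdAddChar_eq_neg ?_
    have hγ : C.gamma2 ≠ C.jfull p := (C.jfull_ne_pathv hlast).symm
    have hs : ∑ β ∈ Finset.range C.k,
          (bitc C.q i β - bitc C.q j β) * bitc C.q (x ^^^ 2 ^ C.jfull p) (C.jfull β) =
        (∑ β ∈ Finset.range C.k, (bitc C.q i β - bitc C.q j β) * bitc C.q x (C.jfull β)) +
          (bitc C.q i p - bitc C.q j p) * (1 - 2 * bitc C.q x (C.jfull p)) := by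
      simp only [bitc_flip, mul_add, Finset.sum_add_distrib]
      congr 1
      rw [Finset.sum_eq_single p]
      · rw [if_pos rfl]
      · intro β _ hne
        rw [if_neg fun h => hne (C.jfull_inj h), mul_zero]
      · intro h
        exact absurd (Finset.mem_range.2 hpk) h
    rw [gExp_sub_gExp, gExp_sub_gExp, hs, bitc_flip_of_ne hγ]
    linear_combination e - (bitc C.q i p - bitc C.q j p) * bitc C.q x (C.jfull p) * h2
  · have hγm : C.gamma2 < C.m := (C.pathv_lt hlast).trans_le (Nat.sub_le _ _)
    refine sum_eq_zero_of_flip_eq_neg hγm _ fun x _ => C.stdAddChar_eq_neg ?_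
    have hs : ∑ β ∈ Finset.range C.k,
          (bitc C.q i β - bitc C.q j β) * bitc C.q (x ^^^ 2 ^ C.gamma2) (C.jfull β) =
        ∑ β ∈ Finset.range C.k, (bitc C.q i β - bitc C.q j β) * bitc C.q x (C.jfull β) :=
      Finset.sum_congr rfl fun β _ => by
        rw [gamma2_eq, bitc_flip_of_ne (C.jfull_ne_pathv hlast)]
    rw [gExp_sub_gExp, gExp_sub_gExp, hs, bitc_flip, if_pos rfl]
    linear_combination e - (bitc C.q i C.k - bitc C.q j C.k) * bitc C.q x C.gamma2 * h2

/-- If `x` and `y` agree on the restricted variables and first differ along the path at the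
vertex `w + 1`, then flipping the vertex `w` in both changes `f x - f y` by `q / 2`. -/
theorem f_flip_sub_f_flip {x y w : ℕ} (hx : x < 2 ^ C.m) (hy : y < 2 ^ C.m)
    (hJ : ∀ β < C.k, x.testBit (C.jfull β) = y.testBit (C.jfull β))
    (hw : w + 1 < C.m - C.k) (hne : x.testBit (C.pathv (w + 1)) ≠ y.testBit (C.pathv (w + 1)))
    (hlt : ∀ β ≤ w, x.testBit (C.pathv β) = y.testBit (C.pathv β)) :
    C.f (x ^^^ 2 ^ C.pathv w) - C.f (y ^^^ 2 ^ C.pathv w) = C.f x - C.f y + C.half := by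
  have hpw : 2 ^ C.pathv w < 2 ^ C.m :=
    Nat.pow_lt_pow_right (by norm_num) ((C.pathv_lt (by omega)).trans_le (Nat.sub_le _ _))
  have hjv : ∀ β < C.k - C.s, C.jfull β = C.jv β := fun β hβ => by simp [jfull, hβ]
  have hjne : ∀ β < C.k - C.s, C.jv β ≠ C.pathv w := fun β hβ => by
    rw [← hjv β hβ]
    exact C.jfull_ne_pathv (by omega)
  obtain ⟨u, v', v, H⟩ := C.hf fun β => x.testBit (C.jv β)
  rw [H x hx fun _ _ => rfl,
    H y hy fun β hβ => by rw [← hjv β hβ, hJ β (by omega)],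
    H _ (Nat.xor_lt_two_pow hx hpw) fun β hβ => by rw [testBit_flip, if_neg (hjne β hβ)],
    H _ (Nat.xor_lt_two_pow hy hpw) fun β hβ => by
      rw [testBit_flip, if_neg (hjne β hβ), ← hjv β hβ, hJ β (by omega)]]
  have hbw : bitc C.q y (C.pathv w) = bitc C.q x (C.pathv w) := by
    simp [bitc, hlt w le_rfl]
  have hlin (S : Finset ℕ) (c : ℕ → ZMod C.q) (g : ℕ → ℕ) :
      (∑ β ∈ S, c β * bitc C.q (x ^^^ 2 ^ C.pathv w) (g β)) -
          ∑ β ∈ S, c β * bitc C.q (y ^^^ 2 ^ C.pathv w) (g β) =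
        (∑ β ∈ S, c β * bitc C.q x (g β)) - ∑ β ∈ S, c β * bitc C.q y (g β) := by
    simp only [← Finset.sum_sub_distrib, bitc_flip, hbw]
    exact Finset.sum_congr rfl fun β _ => by ring
  have hquad :
      ((∑ β ∈ Finset.range (C.m - C.k - 1), bitc C.q (x ^^^ 2 ^ C.pathv w) (C.pathv β) *
            bitc C.q (x ^^^ 2 ^ C.pathv w) (C.pathv (β + 1))) -
          ∑ β ∈ Finset.range (C.m - C.k - 1), bitc C.q (y ^^^ 2 ^ C.pathv w) (C.pathv β) *
            bitc C.q (y ^^^ 2 ^ C.pathv w) (C.pathv (β + 1))) -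
        ((∑ β ∈ Finset.range (C.m - C.k - 1), bitc C.q x (C.pathv β) *
            bitc C.q x (C.pathv (β + 1))) -
          ∑ β ∈ Finset.range (C.m - C.k - 1), bitc C.q y (C.pathv β) *
            bitc C.q y (C.pathv (β + 1))) =
        (1 - 2 * bitc C.q x (C.pathv w)) *
          (bitc C.q x (C.pathv (w + 1)) - bitc C.q y (C.pathv (w + 1))) := by
    simp only [← Finset.sum_sub_distrib]
    rw [Finset.sum_eq_single w]
    · have h1 : C.pathv (w + 1) ≠ C.pathv w := fun h => by
        have := C.pathv_inj hw (by omega) h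
        omega
      rw [bitc_flip_of_ne h1, bitc_flip_of_ne h1, bitc_flip, bitc_flip, if_pos rfl, if_pos rfl,
        hbw]
      ring
    · intro β hβ hβw
      have hβ' := Finset.mem_range.1 hβ
      have h1 : C.pathv β ≠ C.pathv w := fun h => hβw (C.pathv_inj (by omega) (by omega) h)
      rw [bitc_flip_of_ne h1, bitc_flip_of_ne h1]
      by_cases h2 : β + 1 = w
      · have h3 : bitc C.q y (C.pathv β) = bitc C.q x (C.pathv β) := by
          simp [bitc, hlt β (by omega)]
        rw [h2, bitc_flip, bitc_flip, if_pos rfl, if_pos rfl, hbw, h3]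
        ring
      · have h3 : C.pathv (β + 1) ≠ C.pathv w := fun h =>
          h2 (C.pathv_inj (by omega) (by omega) h)
        rw [bitc_flip_of_ne h3, bitc_flip_of_ne h3]
        ring
    · intro h
      exact absurd (Finset.mem_range.2 (by omega)) h
  have e := C.half_mul_bitc_sub hne
  have h2 := C.two_mul_half
  have hu := hlin (Finset.range (C.m - C.k)) u C.iv
  have hv := hlin (Finset.range C.s) v' fun β => C.m - C.s + β
  simp only [pathv] at hquad hu hv e ⊢
  change C.half * _ + _ + _ + _ - (C.half * _ + _ + _ + _) =
    C.half * _ + _ + _ + _ - (C.half * _ + _ + _ + _) + _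
  linear_combination C.half * hquad + hu + hv + e - bitc C.q x (C.iv (C.perm w)) *
    (bitc C.q x (C.iv (C.perm (w + 1))) - bitc C.q y (C.iv (C.perm (w + 1)))) * h2

theorem gExp_flip_path {w : ℕ} (hw : w + 1 < C.m - C.k) (t1 t2 ν x : ℕ) :
    C.gExp t1 t2 ν (x ^^^ 2 ^ C.pathv w) = C.gExp t1 t2 ν x +
      (C.f (x ^^^ 2 ^ C.pathv w) - C.f x) + C.half * bitc C.q ν C.k *
        (if C.gamma1 = C.pathv w then 1 - 2 * bitc C.q x (C.pathv w) else 0) := by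
  have hγ : C.gamma2 ≠ C.pathv w := fun h => by
    have := C.pathv_inj (by omega) (by omega) h
    omega
  have hj (β : ℕ) : bitc C.q (x ^^^ 2 ^ C.pathv w) (C.jfull β) = bitc C.q x (C.jfull β) :=
    bitc_flip_of_ne (C.jfull_ne_pathv (by omega))
  simp only [gExp, hj, bitc_flip_of_ne hγ]
  rw [bitc_flip]
  change _ + C.half * _ = _ + C.half * _ + _ + _
  ring

/-- The path vertex preceding the first one at which `x` and `x + τ` differ. -/
noncomputable def pivot (τ x : ℕ) : ℕ :=
  sInf {β | x.testBit (C.pathv β) ≠ (x + τ).testBit (C.pathv β)} - 1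

theorem pivot_spec {τ x : ℕ} (hτ : τ ≠ 0) (hx : x + τ < 2 ^ C.m) (h : C.Agree x (x + τ)) :
    C.pivot τ x + 1 < C.m - C.k ∧
      x.testBit (C.pathv (C.pivot τ x + 1)) ≠ (x + τ).testBit (C.pathv (C.pivot τ x + 1)) ∧
      ∀ β ≤ C.pivot τ x, x.testBit (C.pathv β) = (x + τ).testBit (C.pathv β) := by
  set S := {β | x.testBit (C.pathv β) ≠ (x + τ).testBit (C.pathv β)}
  obtain ⟨t, ht⟩ := Nat.exists_testBit_ne_of_ne (show x ≠ x + τ by omega)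
  have htm : t < C.m := by
    by_contra! hle
    have hle' : 2 ^ C.m ≤ 2 ^ t := Nat.pow_le_pow_right (by norm_num) hle
    rw [Nat.testBit_eq_false_of_lt (hx.trans_le hle'),
      Nat.testBit_eq_false_of_lt (by omega)] at ht
    exact ht rfl
  obtain ⟨β, hβ, hβS⟩ : ∃ β < C.m - C.k, β ∈ S := by
    rcases C.exists_eq_jfull_or_pathv htm with ⟨β, hβ, rfl⟩ | ⟨β, hβ, rfl⟩
    · exact absurd (h.1 β hβ) ht
    · exact ⟨β, hβ, ht⟩
  have hmem : sInf S ∈ S := Nat.sInf_mem ⟨β, hβS⟩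
  have hle : sInf S ≤ β := Nat.sInf_le hβS
  have hpos : sInf S ≠ 0 := fun h0 => by
    rw [h0] at hmem
    exact hmem h.2
  have hpiv : C.pivot τ x = sInf S - 1 := rfl
  have hsucc : C.pivot τ x + 1 = sInf S := by omega
  refine ⟨by omega, by rw [hsucc]; exact hmem, fun β' hβ' => ?_⟩
  by_contra hne
  have := Nat.sInf_le (show β' ∈ S from hne)
  omega

theorem testBit_flip_eq_iff (x y p t : ℕ) :
    (x ^^^ 2 ^ p).testBit t = (y ^^^ 2 ^ p).testBit t ↔ x.testBit t = y.testBit t := by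
  rw [testBit_flip, testBit_flip]
  split_ifs <;> simp

/-- At a non-zero shift, the agreeing pairs of positions cancel. -/
theorem sum_agree_eq_zero {τ : ℕ} (hτ : τ ≠ 0) (t1 i j ν : ℕ) (s : Finset ℕ)
    (hs : ∀ x, x ∈ s ↔ x + τ < 2 ^ C.m ∧ C.Agree x (x + τ)) :
    ∑ x ∈ s, ZMod.stdAddChar (C.gExp t1 i ν x - C.gExp t1 j ν (x + τ)) = 0 := by
  have hadd {x : ℕ} (hx : x ∈ s) : (x ^^^ 2 ^ C.pathv (C.pivot τ x)) + τ =
      (x + τ) ^^^ 2 ^ C.pathv (C.pivot τ x) := by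
    obtain ⟨hlt, ha⟩ := (hs x).1 hx
    exact flip_add ((C.pivot_spec hτ hlt ha).2.2 _ le_rfl)
  refine Finset.sum_involution (fun x _ => x ^^^ 2 ^ C.pathv (C.pivot τ x)) ?_ ?_ ?_ ?_
  · intro x hx
    obtain ⟨hlt, ha⟩ := (hs x).1 hx
    obtain ⟨hw, hne, hbelow⟩ := C.pivot_spec hτ hlt ha
    have hf := C.f_flip_sub_f_flip (by omega) hlt ha.1 hw hne hbelow
    have hb : bitc C.q (x + τ) (C.pathv (C.pivot τ x)) =
        bitc C.q x (C.pathv (C.pivot τ x)) := by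
      simp [bitc, hbelow _ le_rfl]
    rw [hadd hx, add_comm, C.stdAddChar_eq_neg (b := C.gExp t1 i ν x - C.gExp t1 j ν (x + τ)),
      neg_add_cancel]
    rw [C.gExp_flip_path hw, C.gExp_flip_path hw, hb]
    linear_combination hf
  · intro x _ _ h
    have := congrArg (fun z => Nat.testBit z (C.pathv (C.pivot τ x))) h
    simp at this
  · intro x hx
    obtain ⟨hlt, ha⟩ := (hs x).1 hx
    have hw := (C.pivot_spec hτ hlt ha).1
    have hpw : 2 ^ C.pathv (C.pivot τ x) < 2 ^ C.m :=
      Nat.pow_lt_pow_right (by norm_num) ((C.pathv_lt (by omega)).trans_le (Nat.sub_le _ _))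
    rw [hs, hadd hx]
    refine ⟨Nat.xor_lt_two_pow hlt hpw, fun β hβ => ?_, ?_⟩
    · exact (testBit_flip_eq_iff _ _ _ _).2 (ha.1 β hβ)
    · exact (testBit_flip_eq_iff _ _ _ _).2 ha.2
  · intro x hx
    have hp : C.pivot τ (x ^^^ 2 ^ C.pathv (C.pivot τ x)) = C.pivot τ x := by
      rw [pivot, hadd hx]
      simp only [ne_eq, testBit_flip_eq_iff]
      rfl
    simp only [hp]
    simp

end ZCZSetup

/-- **Proof step of Theorem 1: CCC-sum evaluation.** For every fixed `0 ≤ t_1 ≤ 2^s − 1`,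
all `0 ≤ i, j ≤ 2^{k+1} − 1` and all shifts `0 ≤ τ ≤ 2^m`, one has
`2·Σ_{ν=0}^{2^{k+1}−1} γ(s^{(t_1,i)}_ν, s^{(t_1,j)}_ν)(τ) = 2^{m+k+2}` if `τ = 0` and
`i = j`, and `= 0` otherwise. -/
theorem ccc_sum_evaluation (C : ZCZSetup) (t1 : ℕ) (ht1 : t1 < 2 ^ C.s)
    (i j : ℕ) (hi : i < 2 ^ (C.k + 1)) (hj : j < 2 ^ (C.k + 1))
    (τ : ℕ) (hτ : τ ≤ 2 ^ C.m) :
    2 * (∑ ν ∈ Finset.range (2 ^ (C.k + 1)),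
        accfN (2 ^ C.m) (C.Sseq t1 i ν) (C.Sseq t1 j ν) τ) =
      if τ = 0 ∧ i = j then ((2 : ℂ) ^ (C.m + C.k + 2)) else 0 := by
  have hswap : ∑ ν ∈ Finset.range (2 ^ (C.k + 1)),
      accfN (2 ^ C.m) (C.Sseq t1 i ν) (C.Sseq t1 j ν) τ =
      ∑ ν ∈ Finset.range (2 ^ (C.k + 1)), ∑ x ∈ Finset.range (2 ^ C.m - τ),
        ZMod.stdAddChar (C.gExp t1 i ν x - C.gExp t1 j ν (x + τ)) := by
    simp only [accfN, C.Sseq_mul_conj]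
  rw [hswap]
  rcases eq_or_ne τ 0 with rfl | h0
  · by_cases hij : i = j
    · subst hij
      simp only [add_zero, sub_self, AddChar.map_zero_eq_one, true_and, if_true, Nat.sub_zero]
      simp
      ring
    · simp only [add_zero, Nat.sub_zero, C.sum_position_eq_zero hi hj hij]
      simp [hij]
  · classical
    rw [if_neg fun h => h0 h.1, Finset.sum_comm,
      ← Finset.sum_filter_add_sum_filter_not _ fun x => C.Agree x (x + τ),
      Finset.sum_eq_zero fun x hx =>
        C.sum_index_eq_zero (x := x) (y := x + τ) (Finset.mem_filter.1 hx).2 t1 i j,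
      Finset.sum_comm, Finset.sum_eq_zero fun ν _ => C.sum_agree_eq_zero h0 t1 i j ν _ fun x => ?_,
      add_zero, mul_zero]
    rw [Finset.mem_filter, Finset.mem_range, Nat.lt_sub_iff_add_lt]
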